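/- Let M > 1, L > 0, let φ : ℝ → ℝ be the clamp function, and define R : C(ℝ) → C(ℝ) by (Rξ)(x) = (1/(2√(M−1))) ∫_{Mx−M+1}^{Mx+M−1} φ(Lξ(y)) dy. Then for every continuous ξ : ℝ → ℝ, the function Rξ is Lipschitz continuous with Lipschitz constant M/√(M−1); in particular Rξ is continuous, so R indeed maps C(ℝ) into C(ℝ). -/

import Mathlib

open MeasureTheory

/-- The clamp function: `-1` for `x ≤ -1`, `x` for `-1 < x < 1`, `1` for `x ≥ 1`. -/
noncomputable def clamp (x : ℝ) : ℝ := if x ≤ -1 then -1 else if x < 1 then x else 1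

/-- The map `R` of the Tsirelson–Vershik iteration scheme:
`(Rξ)(x) = (1/(2√(M−1))) ∫_{Mx−M+1}^{Mx+M−1} φ(Lξ(y)) dy`. -/
noncomputable def Rmap (L M : ℝ) (ξ : ℝ → ℝ) (x : ℝ) : ℝ :=
  (1 / (2 * Real.sqrt (M - 1))) * ∫ y in (M * x - M + 1)..(M * x + M - 1), clamp (L * ξ y)

/-!
The primitive of a function bounded by `C` is `C`-Lipschitz. Since `|φ| ≤ 1`, the integral in `Rξ`
is the difference of the values of a `1`-Lipschitz primitive at two points moving with speed `M`,
hence `2M`-Lipschitz, and the factor `1 / (2√(M-1))` turns this into `M / √(M-1)`.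
-/

open scoped NNReal

section IntegralOfBounded

variable {E : Type*} [NormedAddCommGroup E] {f : ℝ → E} {C : ℝ≥0}

theorem intervalIntegrable_of_ae_norm_le {μ : Measure ℝ} [IsLocallyFiniteMeasure μ]
    (hf : AEStronglyMeasurable f μ) (hC : ∀ᵐ t ∂μ, ‖f t‖ ≤ C) (a b : ℝ) :
    IntervalIntegrable f μ a b := by
  refine (intervalIntegrable_const (c := (C : ℝ))).mono_fun hf.restrict ?_
  filter_upwards [ae_restrict_of_ae hC] with t ht
  simpa using ht

variable [NormedSpace ℝ E]

theorem lipschitzWith_integral_right (hf : AEStronglyMeasurable f) (hC : ∀ᵐ t, ‖f t‖ ≤ C)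
    (a : ℝ) : LipschitzWith C fun x => ∫ t in a..x, f t := by
  have hint := intervalIntegrable_of_ae_norm_le hf hC
  refine LipschitzWith.of_dist_le_mul fun x y => ?_
  calc dist (∫ t in a..x, f t) (∫ t in a..y, f t)
      = ‖∫ t in y..x, f t‖ := by
        rw [dist_eq_norm, intervalIntegral.integral_interval_sub_left (hint a x) (hint a y)]
    _ ≤ C * |x - y| :=
        intervalIntegral.norm_integral_le_of_norm_le_const_ae (hC.mono fun _ ht _ => ht)

theorem lipschitzWith_integral_comp {X : Type*} [PseudoEMetricSpace X] {u v : X → ℝ}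
    {Ku Kv : ℝ≥0} (hf : AEStronglyMeasurable f) (hC : ∀ᵐ t, ‖f t‖ ≤ C)
    (hu : LipschitzWith Ku u) (hv : LipschitzWith Kv v) :
    LipschitzWith (C * Kv + C * Ku) fun x => ∫ t in u x..v x, f t := by
  have hint := intervalIntegrable_of_ae_norm_le hf hC
  have hprim := lipschitzWith_integral_right hf hC 0
  have hsplit (x : X) :
      ∫ t in u x..v x, f t = (∫ t in 0..v x, f t) - ∫ t in 0..u x, f t :=
    (intervalIntegral.integral_interval_sub_left (hint _ _) (hint _ _)).symm
  simpa only [hsplit, Function.comp_apply] using (hprim.comp hv).sub (hprim.comp hu)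

end IntegralOfBounded

theorem lipschitzWith_mul_add (m b : ℝ) : LipschitzWith ‖m‖₊ fun x => m * x + b := by
  simpa using (lipschitzWith_smul m).add (LipschitzWith.const b)

theorem clamp_eq_max_min (x : ℝ) : clamp x = max (-1) (min x 1) := by
  unfold clamp
  grind

theorem continuous_clamp : Continuous clamp := by
  simp only [funext clamp_eq_max_min]
  fun_prop

theorem abs_clamp_le_one (x : ℝ) : |clamp x| ≤ 1 := by
  rw [clamp_eq_max_min, abs_le]
  exact ⟨le_max_left _ _, max_le (by norm_num) (min_le_right _ _)⟩

theorem stmt_1_general {M : ℝ} (L : ℝ) (hM : 1 < M) {ξ : ℝ → ℝ} (hξ : AEMeasurable ξ) :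
    LipschitzWith (M / Real.sqrt (M - 1)).toNNReal (Rmap L M ξ) := by
  have hmeas : AEStronglyMeasurable fun y => clamp (L * ξ y) :=
    (continuous_clamp.measurable.comp_aemeasurable (hξ.const_mul L)).aestronglyMeasurable
  have hbound : ∀ᵐ y, ‖clamp (L * ξ y)‖ ≤ (1 : ℝ≥0) := .of_forall fun _ => abs_clamp_le_one _
  have hlower : LipschitzWith ‖M‖₊ fun x => M * x - M + 1 := by
    simpa only [sub_add, ← sub_eq_add_neg] using lipschitzWith_mul_add M (-(M - 1))
  have hupper : LipschitzWith ‖M‖₊ fun x => M * x + M - 1 := by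
    simpa only [add_sub_assoc] using lipschitzWith_mul_add M (M - 1)
  have hR : LipschitzWith (‖1 / (2 * Real.sqrt (M - 1))‖₊ * (1 * ‖M‖₊ + 1 * ‖M‖₊)) (Rmap L M ξ) :=
    (lipschitzWith_smul _).comp (lipschitzWith_integral_comp hmeas hbound hlower hupper)
  have hM₀ : 0 < M := one_pos.trans hM
  convert hR using 1
  ext
  push_cast
  rw [Real.coe_toNNReal _ (by positivity), Real.norm_of_nonneg (by positivity),
    Real.norm_of_nonneg hM₀.le]
  ring

theorem stmt_1 (M L : ℝ) (hM : 1 < M) (hL : 0 < L)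
    (ξ : ℝ → ℝ) (hξ : Continuous ξ) :
    (∀ x y : ℝ, |Rmap L M ξ x - Rmap L M ξ y| ≤ (M / Real.sqrt (M - 1)) * |x - y|) ∧
      Continuous (Rmap L M ξ) := by
  have hR := stmt_1_general L hM hξ.aemeasurable
  have hK : 0 ≤ M / Real.sqrt (M - 1) := by positivity
  exact ⟨fun x y => by simpa only [Real.dist_eq, Real.coe_toNNReal _ hK] using hR.dist_le_mul x y,
    hR.continuous⟩
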